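/- Let f be a constraint of arity k ≥ 3 that is in simple form. If f has imp support and f ∉ ED, then there exists a constraint h of arity strictly less than k such that h has imp support, h ∉ ED, and h is T-constructible from f. -/

import Mathlib

/-- A (complex-valued Boolean) constraint of arity `k`. -/
abbrev Constraint (k : ℕ) : Type := (Fin k → Bool) → ℂ

/-- The binary equality constraint `EQ = [1,0,1]`, as a two-argument function. -/
def EQc : Bool → Bool → ℂ := fun a b => if a = b then 1 else 0

/-- The binary disequality constraint `XOR = [0,1,0]`, as a two-argument function. -/
def XORc : Bool → Bool → ℂ := fun a b => if a = b then 0 else 1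

/-- The binary constraint `Implies = (1,1,0,1)`, as a two-argument function. -/
def IMPc : Bool → Bool → ℂ := fun a b => if a = true ∧ b = false then 0 else 1

/-- The unary constraint `[a, b]` (value `a` on input `0`, value `b` on input `1`). -/
def unC (a b : ℂ) : Constraint 1 := fun x => if x 0 then b else a

/-- The binary constraint `(a,b,c,d) = (f(0,0), f(0,1), f(1,0), f(1,1))`. -/
def binC (a b c d : ℂ) : Constraint 2 := fun x =>
  if x 0 then (if x 1 then d else c) else (if x 1 then b else a)

/-- `OR = [0,1,1]`. -/
def ORc : Constraint 2 := binC 0 1 1 1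

/-- `Implies = (1,1,0,1)` as a binary constraint. -/
def Impliesc : Constraint 2 := binC 1 1 0 1

/-- Membership in `NZ`: the constraint is everywhere nonzero. -/
def inNZ {k : ℕ} (f : Constraint k) : Prop := ∀ x, f x ≠ 0

/-- Membership in `DG`: the constraint is a product of unary constraints, one per variable. -/
def inDG {k : ℕ} (f : Constraint k) : Prop :=
  ∃ g : Fin k → Bool → ℂ, ∀ x, f x = ∏ i, g i (x i)

/-- Membership in `ED`: the constraint is a product of at least one factor, each factor
being a unary constraint applied to some variable, or `EQ`/`XOR` applied to two variables. -/
def inED {k : ℕ} (f : Constraint k) : Prop :=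
  ∃ (l1 l2 : ℕ) (h : Fin l1 → Bool → ℂ) (j : Fin l1 → Fin k)
    (g : Fin l2 → Bool → Bool → ℂ) (m n : Fin l2 → Fin k),
    1 ≤ l1 + l2 ∧ (∀ i, g i = EQc ∨ g i = XORc) ∧
    ∀ x, f x = (∏ i, h i (x (j i))) * ∏ i, g i (x (m i)) (x (n i))

/-- Membership in `IM`: `f ∉ NZ` and `f` is a product of at least one factor, each factor
being a unary constraint applied to some variable, or `Implies` applied to two variables. -/
def inIM {k : ℕ} (f : Constraint k) : Prop :=
  ¬ inNZ f ∧
  ∃ (l1 l2 : ℕ) (h : Fin l1 → Bool → ℂ) (j : Fin l1 → Fin k)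
    (m n : Fin l2 → Fin k),
    1 ≤ l1 + l2 ∧
    ∀ x, f x = (∏ i, h i (x (j i))) * ∏ i, IMPc (x (m i)) (x (n i))

/-- The underlying relation `R_f = {x : f x ≠ 0}` of a constraint `f`. -/
def relOf {k : ℕ} (f : Constraint k) : Set (Fin k → Bool) := {x | f x ≠ 0}

/-- Factors allowed in an IMP-style factorization of a relation:
`Δ_c(x_i)` or `Implies(x_i, x_j)`. -/
inductive ImpFactor (k : ℕ) where
  | delta (c : Bool) (i : Fin k)
  | imp (i j : Fin k)
deriving DecidableEq

/-- Evaluation of an IMP-factor at an assignment. -/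
def ImpFactor.eval {k : ℕ} : ImpFactor k → (Fin k → Bool) → Bool
  | .delta c i, x => x i == c
  | .imp i j, x => !(x i) || x j

/-- `L` is a factor list for the relation `R`: the conjunction of the factors in `L` equals `R`. -/
def isFactorListFor {k : ℕ} (L : List (ImpFactor k)) (R : Set (Fin k → Bool)) : Prop :=
  ∀ x, x ∈ R ↔ ∀ fac ∈ L, fac.eval x = true

/-- Membership in `IMP`: the relation is the conjunction of a positive number of factors of the
forms `Δ_0(x)`, `Δ_1(x)`, `Implies(x,y)`. -/
def inIMP {k : ℕ} (R : Set (Fin k → Bool)) : Prop :=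
  ∃ L : List (ImpFactor k), L ≠ [] ∧ isFactorListFor L R

/-- `f` has imp support when `R_f ∈ IMP`. -/
def hasImpSupport {k : ℕ} (f : Constraint k) : Prop := inIMP (relOf f)

/-- A factor list is imp-distinctive if no variable occurs both in a `Δ_c` factor and in an
`Implies` factor, and no factor `Implies(x,x)` occurs. -/
def impDistinctive {k : ℕ} (L : List (ImpFactor k)) : Prop :=
  (∀ i : Fin k, ¬ ((∃ c, ImpFactor.delta c i ∈ L) ∧
      (∃ j, ImpFactor.imp i j ∈ L ∨ ImpFactor.imp j i ∈ L))) ∧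
  (∀ i : Fin k, ImpFactor.imp i i ∉ L)

/-- Factors of the forms `Δ_c(x_i)` or `EQ(x_i,x_j)`. -/
inductive EqFactor (k : ℕ) where
  | delta (c : Bool) (i : Fin k)
  | eq (i j : Fin k)
deriving DecidableEq

/-- Evaluation of such a factor at an assignment. -/
def EqFactor.eval {k : ℕ} : EqFactor k → (Fin k → Bool) → Bool
  | .delta c i, x => x i == c
  | .eq i j, x => x i == x j

/-- `f` is in simple form: its representing Boolean matrix (rows indexed by `R_f`) has
no all-`0` column, no all-`1` column, and no two identical columns. -/
def simpleForm {k : ℕ} (f : Constraint k) : Prop :=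
  (∀ i : Fin k, ∃ a, f a ≠ 0 ∧ a i = true) ∧
  (∀ i : Fin k, ∃ a, f a ≠ 0 ∧ a i = false) ∧
  (∀ i j : Fin k, i ≠ j → ∃ a, f a ≠ 0 ∧ a i ≠ a j)

/-- A constraint of unspecified arity. -/
abbrev Ctr : Type := Σ k : ℕ, Constraint k

/-- T-constructibility of a constraint from a set `G` of constraints, by finitely many
applications of permutation, pinning, projection, linking, expansion, multiplication,
and normalization. -/
inductive TCon (G : Set Ctr) : Ctr → Prop where
  | base {c : Ctr} : c ∈ G → TCon G c
  | perm {k : ℕ} {g : Constraint k} (σ : Equiv.Perm (Fin k)) :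
      TCon G ⟨k, g⟩ → TCon G ⟨k, fun x => g (fun i => x (σ i))⟩
  | pinning {k : ℕ} {g : Constraint (k+1)} (i : Fin (k+1)) (c : Bool) :
      TCon G ⟨k+1, g⟩ → TCon G ⟨k, fun x => g (i.insertNth c x)⟩
  | proj {k : ℕ} {g : Constraint (k+1)} (i : Fin (k+1)) :
      TCon G ⟨k+1, g⟩ →
      TCon G ⟨k, fun x => g (i.insertNth false x) + g (i.insertNth true x)⟩
  | link {k : ℕ} {g : Constraint (k+1)} (i : Fin (k+1)) (j : Fin k) :
      TCon G ⟨k+1, g⟩ → TCon G ⟨k, fun x => g (i.insertNth (x j) x)⟩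
  | expand {k : ℕ} {g : Constraint k} (i : Fin (k+1)) :
      TCon G ⟨k, g⟩ → TCon G ⟨k+1, fun x => g (fun j => x (i.succAbove j))⟩
  | mul {k : ℕ} {g₁ g₂ : Constraint k} :
      TCon G ⟨k, g₁⟩ → TCon G ⟨k, g₂⟩ → TCon G ⟨k, fun x => g₁ x * g₂ x⟩
  | norm {k : ℕ} {g : Constraint k} (lam : ℂ) (hlam : lam ≠ 0) :
      TCon G ⟨k, g⟩ → TCon G ⟨k, fun x => lam * g x⟩

/-- T-constructibility using no projection operation. -/
inductive TConNoProj (G : Set Ctr) : Ctr → Prop where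
  | base {c : Ctr} : c ∈ G → TConNoProj G c
  | perm {k : ℕ} {g : Constraint k} (σ : Equiv.Perm (Fin k)) :
      TConNoProj G ⟨k, g⟩ → TConNoProj G ⟨k, fun x => g (fun i => x (σ i))⟩
  | pinning {k : ℕ} {g : Constraint (k+1)} (i : Fin (k+1)) (c : Bool) :
      TConNoProj G ⟨k+1, g⟩ → TConNoProj G ⟨k, fun x => g (i.insertNth c x)⟩
  | link {k : ℕ} {g : Constraint (k+1)} (i : Fin (k+1)) (j : Fin k) :
      TConNoProj G ⟨k+1, g⟩ → TConNoProj G ⟨k, fun x => g (i.insertNth (x j) x)⟩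
  | expand {k : ℕ} {g : Constraint k} (i : Fin (k+1)) :
      TConNoProj G ⟨k, g⟩ → TConNoProj G ⟨k+1, fun x => g (fun j => x (i.succAbove j))⟩
  | mul {k : ℕ} {g₁ g₂ : Constraint k} :
      TConNoProj G ⟨k, g₁⟩ → TConNoProj G ⟨k, g₂⟩ →
      TConNoProj G ⟨k, fun x => g₁ x * g₂ x⟩
  | norm {k : ℕ} {g : Constraint k} (lam : ℂ) (hlam : lam ≠ 0) :
      TConNoProj G ⟨k, g⟩ → TConNoProj G ⟨k, fun x => lam * g x⟩

/-- Pinning the `i`-th variable of `f` to the bit `c`. -/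
def pinC {k : ℕ} (f : Constraint (k+1)) (i : Fin (k+1)) (c : Bool) : Constraint k :=
  fun x => f (i.insertNth c x)

/-- `R_f` admits a good factor list: a factor list consisting only of `Implies` factors,
in which every variable is incident to at least one edge of the induced imp graph,
and whose imp graph has no (directed) cycle. -/
def hasGoodFactorList {k : ℕ} (f : Constraint k) : Prop :=
  ∃ L : List (ImpFactor k),
    isFactorListFor L (relOf f) ∧
    (∀ fac ∈ L, ∃ i j, fac = ImpFactor.imp i j) ∧
    (∀ i : Fin k, ∃ j, ImpFactor.imp i j ∈ L ∨ ImpFactor.imp j i ∈ L) ∧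
    ¬ ∃ i : Fin k, Relation.TransGen (fun a b => ImpFactor.imp a b ∈ L) i i

open Function in
theorem tcon_pin {G : Set Ctr} (n : ℕ) : ∀ (g : Constraint (n+2)), TCon G ⟨n+2, g⟩ →
    ∀ (i j : Fin (n+2)), i ≠ j → ∀ y : Fin (n+2) → Bool,
    TCon G ⟨2, fun x => g (update (update y i (x 0)) j (x 1))⟩ := by
  induction n with
  | zero =>
    intro g hg i j hij y
    have h2 : (i = 0 ∧ j = 1) ∨ (i = 1 ∧ j = 0) := by
      fin_cases i <;> fin_cases j <;> simp_all
    rcases h2 with ⟨rfl, rfl⟩ | ⟨rfl, rfl⟩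
    · have : (fun x : Fin 2 → Bool => g (update (update y 0 (x 0)) 1 (x 1))) = g := by
        funext x; congr 1; funext t; fin_cases t <;> simp [update]
      rw [this]; exact hg
    · have : (fun x : Fin 2 → Bool => g (update (update y 1 (x 0)) 0 (x 1)))
          = fun x => g (fun i => x ((Equiv.swap (0 : Fin 2) 1) i)) := by
        funext x; congr 1; funext t; fin_cases t <;> simp [update]
      rw [this]; exact TCon.perm _ hg
  | succ n ih =>
    intro g hg i j hij y
    obtain ⟨p, hp⟩ : ∃ p : Fin (n+1+2), p ∉ ({i, j} : Finset (Fin (n+1+2))) := by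
      by_contra hc
      push Not at hc
      have h1 : (Finset.univ : Finset (Fin (n+1+2))) ⊆ {i, j} := fun p _ => hc p
      have h2 := Finset.card_le_card h1
      have h3 : ({i, j} : Finset (Fin (n+1+2))).card ≤ 2 := Finset.card_le_two
      simp only [Finset.card_univ, Fintype.card_fin] at h2
      omega
    simp only [Finset.mem_insert, Finset.mem_singleton, not_or] at hp
    obtain ⟨i', rfl⟩ := Fin.exists_succAbove_eq (Ne.symm hp.1)
    obtain ⟨j', rfl⟩ := Fin.exists_succAbove_eq (Ne.symm hp.2)
    have hij' : i' ≠ j' := fun h => hij (by rw [h])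
    have := ih _ (TCon.pinning p (y p) hg) i' j' hij' (fun t => y (p.succAbove t))
    convert this using 4 with x
    funext t
    refine Fin.succAboveCases p ?_ (fun t => ?_) t
    · simp [update, hp.1, hp.2]
    · simp [update]

theorem prod_cross {ι : Type} [Fintype ι] (F : ι → Bool → Bool → ℂ)
    (h : ∀ i, F i false false * F i true true = F i false true * F i true false) :
    (∏ i, F i false false) * (∏ i, F i true true)
      = (∏ i, F i false true) * ∏ i, F i true false := by
  rw [← Finset.prod_mul_distrib, ← Finset.prod_mul_distrib]
  exact Finset.prod_congr rfl fun i _ => h i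

theorem ed_cross (h : Constraint 2) (hed : inED h) (h00 : h ![false, false] ≠ 0)
    (h01 : h ![false, true] ≠ 0) :
    h ![false, false] * h ![true, true] = h ![false, true] * h ![true, false] := by
  obtain ⟨l1, l2, u, j, g, m, n, -, hg, hf⟩ := hed
  have c1 := prod_cross (fun i a b => u i (![a, b] (j i))) (by
    intro i
    generalize j i = t
    fin_cases t <;> simp [mul_comm])
  rw [hf] at h00 h01
  have d00 := fun i => Finset.prod_ne_zero_iff.1 (right_ne_zero_of_mul h00) i (Finset.mem_univ i)
  have d01 := fun i => Finset.prod_ne_zero_iff.1 (right_ne_zero_of_mul h01) i (Finset.mem_univ i)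
  have c2 := prod_cross (fun i a b => g i (![a, b] (m i)) (![a, b] (n i))) (by
    intro i
    have e0 := d00 i
    have e1 := d01 i
    revert e0 e1
    generalize m i = s
    generalize n i = t
    rcases hg i with h | h <;> rw [h] <;> fin_cases s <;> fin_cases t <;>
      simp [EQc, XORc])
  simp only [hf]
  linear_combination (∏ i, g i (![false, false] (m i)) (![false, false] (n i))) *
    (∏ i, g i (![true, true] (m i)) (![true, true] (n i))) * c1 +
    (∏ i, u i (![false, true] (j i))) * (∏ i, u i (![true, false] (j i))) * c2

theorem const_of_update {k : ℕ} (φ : (Fin k → Bool) → ℂ)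
    (h : ∀ y j d, φ (Function.update y j d) = φ y) (y z : Fin k → Bool) : φ y = φ z := by
  have key : ∀ s : Finset (Fin k), φ (s.piecewise y z) = φ z := by
    intro s
    induction s using Finset.induction_on with
    | empty => simp
    | insert a s ha ih => rw [Finset.piecewise_insert, h, ih]
  simpa using key Finset.univ

open Function in
theorem ed_of_cross {k : ℕ} (hk : 0 < k) (f : Constraint k) (hnz : ∀ x, f x ≠ 0)
    (hc : ∀ i j, i ≠ j → ∀ y : Fin k → Bool,
      f (update (update y i false) j false) * f (update (update y i true) j true)
      = f (update (update y i false) j true) * f (update (update y i true) j false)) :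
    inED f := by
  have ratio : ∀ i (y z : Fin k → Bool), f (update y i true) / f (update y i false)
      = f (update z i true) / f (update z i false) := by
    intro i
    apply const_of_update (fun y => f (update y i true) / f (update y i false))
    intro y j d
    by_cases hij : i = j
    · subst hij; simp
    · have hh : ∀ d e, f (update (update y j d) i true) / f (update (update y j d) i false)
          = f (update (update y j e) i true) / f (update (update y j e) i false) := by
        intro d e
        rw [div_eq_div_iff (hnz _) (hnz _)]
        simp only [update_comm (Ne.symm hij)]
        have := hc i j hij y
        cases d <;> cases e
        · ring
        · linear_combination -this
        · linear_combination this
        · ring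
      have h3 := hh d (y j)
      simpa using h3
  let o : Fin k → Bool := fun _ => false
  have key : ∀ (x : Fin k → Bool) (s : Finset (Fin k)), f (s.piecewise x o)
      = f o * ∏ i ∈ s, (f (update o i (x i)) / f o) := by
    intro x s
    induction s using Finset.induction_on with
    | empty => simp
    | insert a s ha ih =>
      rw [Finset.piecewise_insert, Finset.prod_insert ha]
      have e1 : s.piecewise x o = update (s.piecewise x o) a false := by
        symm; rw [update_eq_self_iff]; simp [ha, o]
      have e2 : o = update o a false := by
        symm; rw [update_eq_self_iff]
      have e3 : f (update (s.piecewise x o) a (x a)) = f (s.piecewise x o)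
          * (f (update o a (x a)) / f o) := by
        cases x a with
        | false => rw [← e1, ← e2, div_self (hnz _), mul_one]
        | true =>
          have r := ratio a (s.piecewise x o) o
          rw [← e1, ← e2] at r
          rw [← r, mul_div_cancel₀ _ (hnz _)]
      rw [e3, ih]; ring
  refine ⟨k + 1, 0, Fin.cons (fun _ => f o) (fun i b => f (update o i b) / f o),
    Fin.cons ⟨0, hk⟩ id, Fin.elim0, Fin.elim0, Fin.elim0, by omega, fun i => i.elim0, ?_⟩
  intro x
  have := key x Finset.univ
  simp only [Finset.piecewise_univ] at this
  rw [this, Fin.prod_univ_succ]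
  simp

theorem cover_aux {k : ℕ} (le : Fin k → Fin k → Prop) [∀ i j, Decidable (le i j)]
    (anti : ∀ {a b}, le a b → le b a → a = b) (tr : ∀ {a b c}, le a b → le b c → le a c)
    {i j : Fin k} (hij : i ≠ j) (hle : le i j)
    (cover : ∀ m, le i m → le m j → m = i ∨ m = j) {a b : Bool} (hab : a = true → b = true)
    {s t : Fin k} (hst : le s t) :
    (if s = j then b else if s = i then a else decide (le i s)) = true →
    (if t = j then b else if t = i then a else decide (le i t)) = true := by
  by_cases tj : t = j
  · subst tj
    by_cases sj : s = t
    · simp [sj]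
    by_cases si : s = i
    · simpa [sj, si, hij] using hab
    · simp only [sj, si, if_false, decide_eq_true_eq]
      intro h
      exact ((cover s h hst).elim si sj).elim
  by_cases ti : t = i
  · subst ti
    by_cases sj : s = j
    · subst sj
      exact absurd (anti hle hst) hij
    by_cases si : s = t
    · simp [si]
    · simp only [sj, si, if_false, decide_eq_true_eq]
      intro h
      exact (si (anti hst h)).elim
  simp only [tj, ti, if_false, decide_eq_true_eq]
  by_cases sj : s = j
  · subst sj
    exact fun _ => tr hle hst
  by_cases si : s = i
  · subst si
    exact fun _ => hst
  simp only [sj, si, if_false, decide_eq_true_eq]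
  exact fun h => tr h hst

open Function in
theorem exists_good {k : ℕ} (hk : 0 < k) (f : Constraint k) (hsf : simpleForm f)
    (himp : hasImpSupport f) (hed : ¬ inED f) :
    ∃ i j, i ≠ j ∧ ∃ y : Fin k → Bool,
      f (update (update y i false) j false) ≠ 0 ∧ f (update (update y i false) j true) ≠ 0 ∧
      f (update (update y i true) j true) ≠ 0 ∧
      f (update (update y i false) j false) * f (update (update y i true) j true)
      ≠ f (update (update y i false) j true) * f (update (update y i true) j false) := by
  classical
  obtain ⟨s1, s0, sne⟩ := hsf
  obtain ⟨L, -, hL⟩ := himp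
  let le : Fin k → Fin k → Prop := fun i j => ∀ x, f x ≠ 0 → x i = true → x j = true
  have tr : ∀ {a b c}, le a b → le b c → le a c := fun h1 h2 x hx ha => h2 x hx (h1 x hx ha)
  have anti : ∀ {a b}, le a b → le b a → a = b := by
    intro a b h1 h2
    by_contra hne
    obtain ⟨x, hx, hxx⟩ := sne a b hne
    have := h1 x hx
    have := h2 x hx
    cases ha : x a <;> cases hb : x b <;> simp_all
  have memR : ∀ x, (∀ i j, le i j → x i = true → x j = true) → f x ≠ 0 := by
    intro x hx
    refine (hL x).2 ?_
    intro fac hfac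
    cases fac with
    | delta c i =>
      exfalso
      have h3 : ∀ z, f z ≠ 0 → z i = c := by
        intro z hz
        have := (hL z).1 hz _ hfac
        simpa [ImpFactor.eval] using this
      obtain ⟨a, ha, ha'⟩ := s1 i
      obtain ⟨b, hb, hb'⟩ := s0 i
      have := h3 a ha
      have := h3 b hb
      simp_all
    | imp i j =>
      have : le i j := by
        intro z hz hzi
        have := (hL z).1 hz _ hfac
        simpa [ImpFactor.eval, hzi] using this
      have := hx i j this
      cases hi : x i <;> simp_all [ImpFactor.eval]
  by_cases hex : ∃ p : Fin k × Fin k, p.1 ≠ p.2 ∧ le p.1 p.2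
  · obtain ⟨p0, hp0⟩ := hex
    obtain ⟨⟨i, j⟩, hp, hmin⟩ := Finset.exists_min_image
      (Finset.univ.filter fun p : Fin k × Fin k => p.1 ≠ p.2 ∧ le p.1 p.2)
      (fun p => (Finset.univ.filter fun a => le a p.2).card) ⟨p0, by simp [hp0.1, hp0.2]⟩
    simp only [Finset.mem_filter, Finset.mem_univ, true_and] at hp hmin
    obtain ⟨hij, hle⟩ := hp
    have cover : ∀ m, le i m → le m j → m = i ∨ m = j := by
      intro m h1 h2
      by_contra hc
      push Not at hc
      have := hmin (i, m) ⟨fun h => hc.1 h.symm, h1⟩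
      refine absurd this (not_le.2 (Finset.card_lt_card ?_))
      rw [Finset.ssubset_iff_of_subset]
      · refine ⟨j, by simp [le], ?_⟩
        simp only [Finset.mem_filter, Finset.mem_univ, true_and]
        intro h
        exact hc.2 (anti h2 h)
      · intro a
        simp only [Finset.mem_filter, Finset.mem_univ, true_and]
        exact fun h => tr h h2
    let y : Fin k → Bool := fun a => decide (le i a)
    have val : ∀ a b, (a = true → b = true) → f (update (update y i a) j b) ≠ 0 := by
      intro a b hab
      apply memR
      intro s t hst
      have ev : ∀ s, update (update y i a) j b s = if s = j then b else if s = i then a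
        else decide (le i s) := by
        intro s; simp [update, y]
      rw [ev, ev]
      have hs := cover s
      have ht := cover t
      have refl : ∀ s, le s s := fun s x _ h => h
      exact cover_aux le (fun h1 h2 => anti h1 h2) (fun h1 h2 => tr h1 h2) hij hle cover hab hst
    have zer : f (update (update y i true) j false) = 0 := by
      by_contra hne
      have := hle _ hne
      simp [update, hij] at this
    refine ⟨i, j, hij, y, val _ _ (by simp), val _ _ (by simp), val _ _ (by simp), ?_⟩
    rw [zer, mul_zero]
    exact mul_ne_zero (val _ _ (by simp)) (val _ _ (by simp))
  · have nz : ∀ x, f x ≠ 0 := by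
      intro x
      apply memR
      intro i j hij
      by_cases h : i = j
      · subst h; exact id
      · exact absurd ⟨(i, j), h, hij⟩ hex
    by_contra hno
    apply hed
    apply ed_of_cross hk f nz
    intro i j hij y
    by_contra hne
    exact hno ⟨i, j, hij, y, nz _, nz _, nz _, hne⟩

/-- For a constraint `f` of arity `k ≥ 3` in simple form, if `f` has imp
support and `f ∉ ED`, then there exists a constraint `h` of arity strictly less than `k`
such that `h` has imp support, `h ∉ ED`, and `h` is T-constructible from `f`. -/
theorem stmt19 (k : ℕ) (hk : 3 ≤ k) (f : Constraint k) (hsf : simpleForm f)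
    (himp : hasImpSupport f) (hed : ¬ inED f) :
    ∃ (k' : ℕ) (h : Constraint k'), k' < k ∧ hasImpSupport h ∧ ¬ inED h ∧
      TCon ({⟨k, f⟩} : Set Ctr) ⟨k', h⟩ := by
  obtain ⟨n, rfl⟩ : ∃ n, k = n + 2 := ⟨k - 2, by omega⟩
  obtain ⟨i, j, hij, y, h00, h01, h11, hne⟩ := exists_good (by omega) f hsf himp hed
  refine ⟨2, _, by omega, ?_, ?_, tcon_pin n f (TCon.base (Set.mem_singleton _)) i j hij y⟩
  · by_cases h10 : f (Function.update (Function.update y i true) j false) = 0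
    · refine ⟨[ImpFactor.imp 0 1], by simp, ?_⟩
      intro x
      cases h0 : x 0 <;> cases h1 : x 1 <;> simp [relOf, ImpFactor.eval, *]
    · refine ⟨[ImpFactor.imp 0 0], by simp, ?_⟩
      intro x
      cases h0 : x 0 <;> cases h1 : x 1 <;> simp [relOf, ImpFactor.eval, *]
  · intro hE
    exact hne (ed_cross _ hE h00 h01)
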